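/- arXiv:2002.09651 — 2 statements merged into one kernel-verified Lean document; each statement's English description precedes it below -/
import Mathlib

section
/- Let X be a Polish space and E a countable Borel equivalence relation on X. Then E is compressible if and only if E is Borel isomorphic to E × I_ℕ, where I_ℕ is the complete (indiscrete) equivalence relation on ℕ. -/
/-!
From an isomorphism `f : X → X × ℕ`, shifting the `ℕ`-coordinate by one is a compression of
`E × I_ℕ`, and conjugating it by `f` gives a compression of `E`.

Conversely let `φ` be a compression and `A` the complement of its range, a Borel set meeting every
class. The sets `φ^m[A]` are pairwise disjoint, so `(a, m) ↦ φ^m(a)` is an injection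
`A × ℕ → X` inside the classes. To inject `X × ℕ` into `X` it therefore suffices to inject `X` into
`A × ℕ`, that is, to choose Borel `a : X → A` with `x E a(x)` and Borel `n : X → ℕ` such that
`x ↦ (a(x), n(x))` is injective. Writing `E` as a countable union of Borel partial injections `G m`,
take `n(x)` least such that `G (n x)` sends `x` into `A`, and `a(x)` the image. A Borel
Schröder–Bernstein argument, for this injection and `x ↦ (x, 0)`, ends the proof.

The decomposition of `E` is the Lusin–Novikov theorem: if `π : Z → X` is a Borel map between
standard Borel spaces with countable fibres, then `Z` is a countable union of Borel sets on which
`π` is injective (`exists_countable_cover_isSection`). After refining the topology of `Z`, `π` is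
continuous. Call a family of subsets of `Z` large if, whenever countably many
Borel sets on which `π` is injective are removed, some fibre still meets every member of the family.
If the theorem fails, `{Z}` is large. A finite large family of open sets can be
enlarged, staying large, by two small disjoint open subsets of each member
(`LargeFamily.exists_split`); otherwise, after removing countably many such Borel sets, `π` would be
injective on an analytic part of the member, and by Lusin separation this part lies in one more
Borel set on which `π` is injective. Iterating gives a Cantor scheme whose `2^ℕ` limit points lie
in a single fibre, which is then uncountable.
-/

open MeasureTheory

/-! ### The Lusin–Novikov theorem -/

section LusinNovikov

open Set Filter Topology TopologicalSpace

variable {Z X : Type*}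

/-- A Borel set meeting each fibre of `π` in at most one point. -/
def IsSection [MeasurableSpace Z] (π : Z → X) (B : Set Z) : Prop :=
  MeasurableSet B ∧ InjOn π B

/-- The family `𝒜` is large for `π` if no countable union of sections can be removed so that
no fibre of `π` meets all the remaining sets `A \ ⋃₀ 𝒞`, `A ∈ 𝒜`. Testing all members against one
`𝒞` is no restriction for a countable `𝒜`, since countably many `𝒞` can be merged. -/
def LargeFamily [MeasurableSpace Z] (π : Z → X) (𝒜 : Set (Set Z)) : Prop :=
  ∀ 𝒞 : Set (Set Z), 𝒞.Countable → (∀ B ∈ 𝒞, IsSection π B) →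
    ∃ x, ∀ A ∈ 𝒜, ∃ z ∈ A, z ∉ ⋃₀ 𝒞 ∧ π z = x

lemma LargeFamily.mono [MeasurableSpace Z] {π : Z → X} {𝒜 ℬ : Set (Set Z)}
    (h : LargeFamily π ℬ) (hsub : 𝒜 ⊆ ℬ) : LargeFamily π 𝒜 := by
  intro 𝒞 hc hs
  obtain ⟨x, hx⟩ := h 𝒞 hc hs
  exact ⟨x, fun A hA => hx A (hsub hA)⟩

variable [TopologicalSpace X] [PolishSpace X] [MeasurableSpace X] [BorelSpace X]

/-- For each basic open `U`, the images of `S ∩ U` and `S \ U` are disjoint analytic sets, so a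
Borel `C U` separates them. The points `z` such that `z ∈ U ↔ π z ∈ C U` for all `U` form a Borel
set containing `S`, and such a point is determined by `π z`. -/
lemma exists_isSection_of_analyticSet [TopologicalSpace Z] [PolishSpace Z]
    [MeasurableSpace Z] [BorelSpace Z]
    {π : Z → X} (hπ : Continuous π) {S : Set Z} (hS : AnalyticSet S) (hinj : InjOn π S) :
    ∃ B, S ⊆ B ∧ IsSection π B := by
  have hsep : ∀ U ∈ countableBasis Z, ∃ C : Set X, MeasurableSet C ∧
      ∀ z ∈ S, z ∈ U ↔ π z ∈ C := by
    intro U hU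
    have hUo : IsOpen U := isOpen_of_mem_countableBasis hU
    have hinter : ∀ T : Set Z, MeasurableSet T → AnalyticSet (π '' (S ∩ T)) := by
      intro T hT
      refine AnalyticSet.image_of_continuous ?_ hπ
      have := AnalyticSet.iInter (s := fun b : Bool => if b then S else T)
        (by intro b; cases b <;> simp [hS, hT.analyticSet])
      convert this using 1
      ext z; simp [and_comm]
    obtain ⟨C, hC1, hC2, hC⟩ := (hinter U hUo.measurableSet).measurablySeparable
      (hinter Uᶜ hUo.measurableSet.compl) (by
        rw [Set.disjoint_left]
        rintro _ ⟨z, ⟨hz, hzU⟩, rfl⟩ ⟨w, ⟨hw, hwU⟩, h⟩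
        exact hwU (hinj hw hz h ▸ hzU))
    refine ⟨C, hC, fun z hz => ⟨fun h => hC1 ⟨z, ⟨hz, h⟩, rfl⟩, fun h => ?_⟩⟩
    by_contra hn
    exact Set.disjoint_left.1 hC2 ⟨z, ⟨hz, hn⟩, rfl⟩ h
  choose! C hCm hC using hsep
  refine ⟨⋂ U ∈ countableBasis Z, {z | z ∈ U ↔ π z ∈ C U}, ?_, ?_, ?_⟩
  · intro z hz
    simp only [mem_iInter]
    exact fun U hU => hC U hU z hz
  · refine MeasurableSet.biInter (countable_countableBasis Z) fun U hU => ?_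
    have h1 : MeasurableSet U := (isOpen_of_mem_countableBasis hU).measurableSet
    have h2 : MeasurableSet (π ⁻¹' C U) := hπ.measurable (hCm U hU)
    exact h1.iff h2
  · intro z hz w hw h
    simp only [mem_iInter] at hz hw
    by_contra hne
    obtain ⟨U, hU, hzU, hUs⟩ := (isBasis_countableBasis Z).exists_subset_of_mem_open
      (show z ∈ ({w} : Set Z)ᶜ from hne) isOpen_compl_singleton
    have h1 : z ∈ U ↔ π z ∈ C U := hz U hU
    have h2 : w ∈ U ↔ π w ∈ C U := hw U hU
    rw [h, ← h2] at h1
    exact hUs (h1.1 hzU) rfl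

/-- `U true` and `U false` are disjoint open sets of diameter at most `ε` with closures in `A`. -/
structure IsSplit [MetricSpace Z] (ε : ENNReal) (A : Set Z) (U : Bool → Set Z) : Prop where
  isOpen : ∀ b, IsOpen (U b)
  closure_subset : ∀ b, closure (U b) ⊆ A
  ediam_le : ∀ b, Metric.ediam (U b) ≤ ε
  disjoint : Disjoint (U true) (U false)

/-- If no splitting of `A` into basic open sets keeps the family large, let `𝒟` collect the sections
witnessing this for all the countably many candidates. On the analytic set of points of
`A \ ⋃₀ 𝒟` whose fibre meets every `B \ ⋃₀ 𝒟`, `B ∈ 𝒜`, the map `π` is then injective, so one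
more section absorbs this set, contradicting that `𝒜` is large. -/
lemma LargeFamily.exists_split_one [MetricSpace Z] [CompleteSpace Z] [SecondCountableTopology Z]
    [MeasurableSpace Z] [BorelSpace Z]
    {π : Z → X} (hπ : Continuous π) {𝒜 : Set (Set Z)} (hcount : 𝒜.Countable)
    (hopen : ∀ A ∈ 𝒜, IsOpen A) (hlarge : LargeFamily π 𝒜) {A : Set Z} (hA : A ∈ 𝒜)
    {ε : ENNReal} (hε : ε ≠ 0) :
    ∃ U, IsSplit ε A U ∧ LargeFamily π (𝒜 ∪ range U) := by
  by_contra! hcon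
  set I : Set (Bool → Set Z) := {U | (∀ b, U b ∈ countableBasis Z) ∧ IsSplit ε A U} with hI
  have hIc : I.Countable := by
    refine (Set.countable_pi (fun _ : Bool => countable_countableBasis Z)).mono ?_
    intro U hU
    exact hU.1
  have hsm : ∀ U ∈ I, ∃ 𝒞 : Set (Set Z), 𝒞.Countable ∧ (∀ B ∈ 𝒞, IsSection π B) ∧
      ∀ x, ∃ A ∈ 𝒜 ∪ range U, ∀ z ∈ A, z ∉ ⋃₀ 𝒞 → π z ≠ x := by
    intro U hU
    have := hcon U hU.2
    unfold LargeFamily at this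
    push Not at this
    exact this
  choose! 𝒞 h𝒞c h𝒞s h𝒞 using hsm
  set 𝒟 : Set (Set Z) := ⋃ U ∈ I, 𝒞 U with h𝒟
  have h𝒟c : 𝒟.Countable := hIc.biUnion h𝒞c
  have h𝒟s : ∀ B ∈ 𝒟, IsSection π B := by
    intro B hB
    simp only [h𝒟, mem_iUnion] at hB
    obtain ⟨U, hU, hB⟩ := hB
    exact h𝒞s U hU B hB
  have hNm : MeasurableSet (⋃₀ 𝒟) := MeasurableSet.sUnion h𝒟c fun B hB => (h𝒟s B hB).1
  set W : Set X := ⋂ B : 𝒜, π '' (B.1 \ ⋃₀ 𝒟) with hW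
  have : Countable 𝒜 := hcount.to_subtype
  have : Nonempty 𝒜 := ⟨⟨A, hA⟩⟩
  have hWa : AnalyticSet W := AnalyticSet.iInter fun B =>
    (((hopen B.1 B.2).measurableSet.diff hNm).analyticSet).image_of_continuous hπ
  have hSa : AnalyticSet ((A \ ⋃₀ 𝒟) ∩ π ⁻¹' W) := by
    have := AnalyticSet.iInter (s := fun b : Bool => if b then (A \ ⋃₀ 𝒟) else π ⁻¹' W) (by
        intro b
        cases b
        · simpa using hWa.preimage hπ
        · simpa using ((hopen A hA).measurableSet.diff hNm).analyticSet)
    convert this using 1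
    ext z; simp [and_comm]
  have hinj : InjOn π ((A \ ⋃₀ 𝒟) ∩ π ⁻¹' W) := by
    rintro z ⟨⟨hzA, hzN⟩, hzW⟩ w ⟨⟨hwA, hwN⟩, -⟩ hzw
    by_contra hne
    -- two such points of one fibre would be separated by a candidate splitting in `I`
    obtain ⟨O, O', hO, hO', hzO, hwO, hdis⟩ := t2_separation hne
    have key : ∀ (P : Set Z) (u : Z), IsOpen P → u ∈ P → u ∈ A → ∃ U ∈ countableBasis Z,
        u ∈ U ∧ closure U ⊆ A ∩ P ∧ Metric.ediam U ≤ ε := by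
      intro P u hP huP huA
      have hnhds : (A ∩ P) ∩ Metric.eball u (ε / 2) ∈ 𝓝 u :=
        inter_mem (inter_mem ((hopen A hA).mem_nhds huA) (hP.mem_nhds huP))
          (Metric.eball_mem_nhds u (ENNReal.half_pos hε))
      obtain ⟨U, hU, huU, hUs⟩ := (isBasis_countableBasis Z).exists_closure_subset hnhds
      refine ⟨U, hU, huU, hUs.trans inter_subset_left, ?_⟩
      refine (Metric.ediam_mono (subset_closure.trans (hUs.trans inter_subset_right))).trans ?_
      refine Metric.ediam_eball_le.trans ?_
      rw [ENNReal.mul_div_cancel (by norm_num) (by norm_num)]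
    obtain ⟨U, hU, hzU, hUs, hUd⟩ := key O z hO hzO hzA
    obtain ⟨V, hV, hwV, hVs, hVd⟩ := key O' w hO' hwO hwA
    set T : Bool → Set Z := fun b => if b then U else V with hT
    have hTI : T ∈ I := by
      refine ⟨?_, ?_, ?_, ?_, ?_⟩
      · rintro (_ | _) <;> simp [hT, hU, hV]
      · rintro (_ | _)
        · simpa [hT] using isOpen_of_mem_countableBasis hV
        · simpa [hT] using isOpen_of_mem_countableBasis hU
      · rintro (_ | _)
        · simpa [hT] using hVs.trans inter_subset_left
        · simpa [hT] using hUs.trans inter_subset_left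
      · rintro (_ | _) <;> simp [hT, hUd, hVd]
      · simpa [hT] using hdis.mono (subset_closure.trans (hUs.trans inter_subset_right))
          (subset_closure.trans (hVs.trans inter_subset_right))
    have hsubN : ⋃₀ 𝒞 T ⊆ ⋃₀ 𝒟 := sUnion_subset_sUnion (subset_biUnion_of_mem hTI)
    obtain ⟨B, hB, hBx⟩ := h𝒞 T hTI (π z)
    rcases hB with hB | ⟨b, rfl⟩
    · obtain ⟨y, ⟨hyB, hyN⟩, hyz⟩ := mem_iInter.1 hzW ⟨B, hB⟩
      exact hBx y hyB (fun h => hyN (hsubN h)) hyz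
    · cases b
      · exact hBx w (by simpa [hT] using hwV) (fun h => hwN (hsubN h)) hzw.symm
      · exact hBx z (by simpa [hT] using hzU) (fun h => hzN (hsubN h)) rfl
  obtain ⟨B, hSB, hB⟩ := exists_isSection_of_analyticSet hπ hSa hinj
  obtain ⟨x, hx⟩ := hlarge (insert B 𝒟) (h𝒟c.insert B) (by
    rintro C (rfl | hC)
    · exact hB
    · exact h𝒟s C hC)
  obtain ⟨z, hzA, hzN, rfl⟩ := hx A hA
  rw [sUnion_insert, mem_union, not_or] at hzN
  refine hzN.1 (hSB ⟨⟨hzA, hzN.2⟩, ?_⟩)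
  refine mem_iInter.2 fun C => ?_
  obtain ⟨y, hyC, hyN, hyz⟩ := hx C.1 C.2
  rw [sUnion_insert, mem_union, not_or] at hyN
  exact ⟨y, ⟨hyC, hyN.2⟩, hyz⟩

/-- All members of a finite large family can be split at once, by splitting one at a time. -/
lemma LargeFamily.exists_split [MetricSpace Z] [CompleteSpace Z] [SecondCountableTopology Z]
    [MeasurableSpace Z] [BorelSpace Z]
    {π : Z → X} (hπ : Continuous π) {𝒜 : Set (Set Z)} (hfin : 𝒜.Finite)
    (hopen : ∀ A ∈ 𝒜, IsOpen A) (hlarge : LargeFamily π 𝒜) {ε : ENNReal} (hε : ε ≠ 0) :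
    ∃ U : Set Z → Bool → Set Z, (∀ A ∈ 𝒜, IsSplit ε A (U A)) ∧
      LargeFamily π (𝒜 ∪ ⋃ A ∈ 𝒜, range (U A)) := by
  suffices H : ∀ 𝒯 : Set (Set Z), 𝒯.Finite → 𝒯 ⊆ 𝒜 → ∃ U : Set Z → Bool → Set Z,
      (∀ A ∈ 𝒯, IsSplit ε A (U A)) ∧ LargeFamily π (𝒜 ∪ ⋃ A ∈ 𝒯, range (U A)) from
    H 𝒜 hfin Subset.rfl
  intro 𝒯 h𝒯
  induction 𝒯, h𝒯 using Set.Finite.induction_on with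
  | empty => exact fun _ => ⟨fun _ _ => ∅, by simp, by simpa using hlarge⟩
  | @insert A 𝒯 hA h𝒯 ih =>
    intro hsub
    obtain ⟨U, hU, hUl⟩ := ih ((subset_insert _ _).trans hsub)
    obtain ⟨V, hV, hVl⟩ := hUl.exists_split_one hπ
      (hfin.countable.union (h𝒯.countable.biUnion fun B _ => countable_range _))
      (by
        rintro B (hB | hB)
        · exact hopen B hB
        · simp only [mem_iUnion] at hB
          obtain ⟨C, hC, b, rfl⟩ := hB
          exact (hU C hC).isOpen b)
      (Or.inl (hsub (mem_insert _ _))) hε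
    classical
    have hne : ∀ B ∈ 𝒯, B ≠ A := fun B hB h => hA (h ▸ hB)
    refine ⟨Function.update U A V, ?_, hVl.mono ?_⟩
    · rintro B (rfl | hB)
      · simpa using hV
      · simpa [hne B hB] using hU B hB
    · rintro C (hC | hC)
      · exact Or.inl (Or.inl hC)
      · simp only [mem_iUnion] at hC
        obtain ⟨B, hB, hC⟩ := hC
        rcases hB with rfl | hB
        · right; simpa using hC
        · left; right
          simp only [mem_iUnion]
          exact ⟨B, hB, by simpa [hne B hB] using hC⟩

/-- Iterated splitting, starting from `Z` itself, yields a Cantor scheme; since any two sets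
of the same level contain points with equal image, `π` is constant on the limit points. -/
lemma exists_not_countable_fiber [MetricSpace Z] [CompleteSpace Z] [SecondCountableTopology Z]
    [MeasurableSpace Z] [BorelSpace Z]
    {π : Z → X} (hπ : Continuous π) (hlarge : LargeFamily π {univ}) :
    ∃ x, ¬ (π ⁻¹' {x}).Countable := by
  let σ := {𝒜 : Set (Set Z) // 𝒜.Finite ∧ (∀ A ∈ 𝒜, IsOpen A) ∧ LargeFamily π 𝒜}
  have hnext : ∀ (n : ℕ) (s : σ), ∃ (U : Set Z → Bool → Set Z) (t : σ),
      ∀ A ∈ s.1, IsSplit ((n : ENNReal)⁻¹) A (U A) ∧ ∀ b, U A b ∈ t.1 := by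
    rintro n ⟨𝒜, hfin, hopen, hl⟩
    obtain ⟨U, hU, hUl⟩ := hl.exists_split hπ hfin hopen
      (ENNReal.inv_ne_zero.2 (ENNReal.natCast_ne_top n))
    refine ⟨U, ⟨_, hfin.union (hfin.biUnion fun B _ => finite_range _), ?_, hUl⟩, ?_⟩
    · rintro B (hB | hB)
      · exact hopen B hB
      · simp only [mem_iUnion] at hB
        obtain ⟨C, hC, b, rfl⟩ := hB
        exact (hU C hC).isOpen b
    · intro A hA
      refine ⟨hU A hA, fun b => Or.inr ?_⟩
      simp only [mem_iUnion]
      exact ⟨A, hA, b, rfl⟩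
  choose U t hUt using hnext
  -- `st n` is the family after `n` rounds; `D l`, for `l` of length `n`, is a member of `st n`
  let st : ℕ → σ := fun n => Nat.rec ⟨{univ}, by simp, by simp, hlarge⟩ (fun n s => t n s) n
  let D : List Bool → Set Z :=
    fun l => List.rec univ (fun b l A => U l.length (st l.length) A b) l
  have hDcons : ∀ b l, D (b :: l) = U l.length (st l.length) (D l) b := fun _ _ => rfl
  have hD : ∀ l, D l ∈ (st l.length).1 := by
    intro l
    induction l with
    | nil => exact mem_singleton _
    | cons b l ih => exact (hUt l.length (st l.length) (D l) ih).2 b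
  have hsplit : ∀ l, IsSplit ((l.length : ENNReal)⁻¹) (D l) (fun b => D (b :: l)) :=
    fun l => (hUt l.length (st l.length) (D l) (hD l)).1
  have hanti : CantorScheme.ClosureAntitone D := fun l b => (hsplit l).closure_subset b
  have hdisj : CantorScheme.Disjoint D := by
    intro l a b hab
    cases a <;> cases b
    · exact absurd rfl hab
    · exact (hsplit l).disjoint.symm
    · exact (hsplit l).disjoint
    · exact absurd rfl hab
  have hdiam : CantorScheme.VanishingDiam D := by
    intro x
    rw [← tendsto_add_atTop_iff_nat 1]
    refine tendsto_of_tendsto_of_tendsto_of_le_of_le tendsto_const_nhds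
      ENNReal.tendsto_inv_nat_nhds_zero (fun _ => zero_le) fun n => ?_
    have := (hsplit (PiNat.res x n)).ediam_le (x n)
    simpa using this
  have hne : ∀ l, (D l).Nonempty := by
    intro l
    obtain ⟨x, hx⟩ := (st l.length).2.2.2 ∅ (by simp) (by simp)
    obtain ⟨z, hz, -⟩ := hx _ (hD l)
    exact ⟨z, hz⟩
  have huniv := hanti.map_of_vanishingDiam hdiam hne
  let F : (ℕ → Bool) → Z := fun α => (CantorScheme.inducedMap D).2 ⟨α, huniv ▸ mem_univ α⟩
  have hFinj : Function.Injective F := fun α β h => by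
    simpa using hdisj.map_injective h
  have hFmem : ∀ α n, F α ∈ D (PiNat.res α n) := fun α n => CantorScheme.map_mem _ n
  have hlim : ∀ (α : ℕ → Bool) (z : ℕ → Z), (∀ n, z n ∈ D (PiNat.res α n)) →
      Tendsto z atTop (𝓝 (F α)) := by
    intro α z hz
    rw [tendsto_iff_edist_tendsto_0]
    exact tendsto_of_tendsto_of_tendsto_of_le_of_le tendsto_const_nhds (hdiam α)
      (fun _ => zero_le) fun n => Metric.edist_le_ediam_of_mem (hz n) (hFmem α n)
  have hconst : ∀ α β, π (F α) = π (F β) := by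
    intro α β
    have : ∀ n, ∃ z ∈ D (PiNat.res α n), ∃ w ∈ D (PiNat.res β n), π z = π w := by
      intro n
      obtain ⟨x, hx⟩ := (st n).2.2.2 ∅ (by simp) (by simp)
      obtain ⟨z, hz, -, hzx⟩ := hx _ (by simpa using hD (PiNat.res α n))
      obtain ⟨w, hw, -, hwx⟩ := hx _ (by simpa using hD (PiNat.res β n))
      exact ⟨z, hz, w, hw, hzx.trans hwx.symm⟩
    choose z hz w hw hzw using this
    refine tendsto_nhds_unique ((hπ.tendsto _).comp (hlim α z hz)) ?_
    have : π ∘ z = π ∘ w := funext hzw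
    rw [this]
    exact (hπ.tendsto _).comp (hlim β w hw)
  refine ⟨π (F fun _ => true), fun hc => ?_⟩
  have h1 : (range F).Countable := hc.mono (by
    rintro _ ⟨α, rfl⟩
    exact hconst _ _)
  have h2 : Countable (ℕ → Bool) := by
    have := h1.to_subtype
    exact (Set.rangeFactorization_injective.2 hFinj).countable
  obtain ⟨g, hg⟩ := exists_injective_nat (ℕ → Bool)
  classical
  refine Function.cantor_injective (fun s : Set ℕ => g fun n => decide (n ∈ s)) ?_
  intro s s' h
  ext n
  simpa using congrFun (hg h) n

/-- The **Lusin–Novikov theorem**, for a Borel map with countable fibres. -/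
theorem exists_countable_cover_isSection [MeasurableSpace Z] [StandardBorelSpace Z]
    {π : Z → X} (hπ : Measurable π) (hcount : ∀ x, (π ⁻¹' {x}).Countable) :
    ∃ B : ℕ → Set Z, (∀ n, IsSection π (B n)) ∧ ⋃ n, B n = univ := by
  suffices H : ∃ 𝒞 : Set (Set Z), 𝒞.Countable ∧ (∀ B ∈ 𝒞, IsSection π B) ∧ ⋃₀ 𝒞 = univ by
    obtain ⟨𝒞, hc, hs, hU⟩ := H
    obtain ⟨B, hB⟩ := (hc.insert ∅).exists_eq_range (insert_nonempty _ _)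
    refine ⟨B, fun n => ?_, ?_⟩
    · have : B n ∈ insert ∅ 𝒞 := hB ▸ mem_range_self n
      rcases this with h | h
      · rw [h]; exact ⟨MeasurableSet.empty, by simp⟩
      · exact hs _ h
    · rw [← sUnion_range, ← hB, sUnion_insert, hU, union_univ]
  let := upgradeStandardBorel Z
  have hZ : PolishSpace Z := inferInstance
  obtain ⟨τ, hle, hcont, hτ⟩ := hπ.exists_continuous
  -- refining the topology to `τ` does not change the Borel sets, hence not the sections
  have hborel : ‹MeasurableSpace Z› = @borel Z τ := by
    rw [eq_borel_upgradeStandardBorel Z]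
    exact (borel_eq_borel_of_le hτ hZ hle).symm
  clear hle
  let := τ
  have : BorelSpace Z := ⟨hborel⟩
  let := upgradeIsCompletelyMetrizable Z
  by_contra! hcon
  obtain ⟨x, hx⟩ := exists_not_countable_fiber (π := π) hcont (by
    intro 𝒞 hc hs
    obtain ⟨z, hz⟩ := (ne_univ_iff_exists_notMem _).1 (hcon 𝒞 hc hs)
    refine ⟨π z, ?_⟩
    rintro _ rfl
    exact ⟨z, mem_univ _, hz, rfl⟩)
  exact hx (hcount x)

end LusinNovikov

/-! ### Countable Borel equivalence relations and compressions -/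

section Compressible

open Set

/-- By Lusin–Souslin, a Borel bijection has a Borel inverse. -/
lemma exists_measurable_inverse {α β : Type*} [MeasurableSpace α] [StandardBorelSpace α]
    [MeasurableSpace β] [StandardBorelSpace β] {f : α → β} (hf : Measurable f)
    (hbij : Function.Bijective f) :
    ∃ g : β → α, Measurable g ∧ (∀ a, g (f a) = a) ∧ ∀ b, f (g b) = b := by
  let e := Equiv.ofBijective f hbij
  refine ⟨e.symm, fun s hs => ?_, e.symm_apply_apply, e.apply_symm_apply⟩
  rw [← e.image_eq_preimage_symm]
  exact hs.image_of_measurable_injOn hf hbij.1.injOn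

variable {X : Type*} [TopologicalSpace X] [PolishSpace X] [MeasurableSpace X] [BorelSpace X]
  {E : X → X → Prop}

/-- Both projections of `E` have countable fibres; intersect the two Lusin–Novikov covers. -/
lemma exists_partial_injections (hE : Equivalence E)
    (hEmeas : MeasurableSet {p : X × X | E p.1 p.2})
    (hEcount : ∀ x : X, {y | E x y}.Countable) :
    ∃ G : ℕ → Set (X × X), (∀ n, MeasurableSet (G n) ∧ InjOn Prod.fst (G n) ∧
      InjOn Prod.snd (G n)) ∧ ⋃ n, G n = {p | E p.1 p.2} := by
  let Z := {p : X × X // p ∈ {p : X × X | E p.1 p.2}}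
  have : StandardBorelSpace Z := hEmeas.standardBorel
  have hc1 : ∀ x, ((fun z : Z => z.1.1) ⁻¹' {x}).Countable := by
    intro x
    refine Set.MapsTo.countable_of_injOn (f := fun z : Z => z.1.2) (t := {y | E x y}) ?_ ?_
      (hEcount x)
    · rintro ⟨⟨a, b⟩, h⟩ rfl
      exact h
    · rintro ⟨⟨a, b⟩, h⟩ rfl ⟨⟨a', b'⟩, h'⟩ (h1 : a' = a) (h2 : b = b')
      subst h1 h2; rfl
  have hc2 : ∀ x, ((fun z : Z => z.1.2) ⁻¹' {x}).Countable := by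
    intro x
    refine Set.MapsTo.countable_of_injOn (f := fun z : Z => z.1.1) (t := {y | E x y}) ?_ ?_
      (hEcount x)
    · rintro ⟨⟨a, b⟩, h⟩ rfl
      exact hE.symm h
    · rintro ⟨⟨a, b⟩, h⟩ rfl ⟨⟨a', b'⟩, h'⟩ (h1 : b' = b) (h2 : a = a')
      subst h1 h2; rfl
  obtain ⟨B, hB, hBu⟩ := exists_countable_cover_isSection
    (measurable_fst.comp measurable_subtype_coe) hc1
  obtain ⟨C, hC, hCu⟩ := exists_countable_cover_isSection
    (measurable_snd.comp measurable_subtype_coe) hc2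
  refine ⟨fun n => Subtype.val '' (B n.unpair.1 ∩ C n.unpair.2), fun n => ⟨?_, ?_, ?_⟩, ?_⟩
  · exact ((hB _).1.inter (hC _).1).image_of_measurable_injOn measurable_subtype_coe
      Subtype.val_injective.injOn
  · rintro _ ⟨z, hz, rfl⟩ _ ⟨w, hw, rfl⟩ h
    exact congrArg _ ((hB _).2 hz.1 hw.1 h)
  · rintro _ ⟨z, hz, rfl⟩ _ ⟨w, hw, rfl⟩ h
    exact congrArg _ ((hC _).2 hz.2 hw.2 h)
  · ext p
    simp only [mem_iUnion]
    constructor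
    · rintro ⟨n, z, -, rfl⟩
      exact z.2
    · intro hp
      obtain ⟨m, hm⟩ := mem_iUnion.1 (hBu ▸ mem_univ (⟨p, hp⟩ : Z))
      obtain ⟨k, hk⟩ := mem_iUnion.1 (hCu ▸ mem_univ (⟨p, hp⟩ : Z))
      exact ⟨Nat.pair m k, ⟨p, hp⟩, by simpa using ⟨hm, hk⟩, rfl⟩

/-- A Borel set `A` meeting every class admits a Borel injection `x ↦ (a x, n x)` of `X` into
`A × ℕ` with `a x` in the class of `x`. -/
lemma exists_injection_prod_nat (hE : Equivalence E)
    (hEmeas : MeasurableSet {p : X × X | E p.1 p.2})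
    (hEcount : ∀ x : X, {y | E x y}.Countable) {A : Set X} (hA : MeasurableSet A)
    (hAE : ∀ x, ∃ y, E x y ∧ y ∈ A) :
    ∃ (a : X → X) (n : X → ℕ), Measurable a ∧ Measurable n ∧ (∀ x, E x (a x)) ∧
      (∀ x, a x ∈ A) ∧ ∀ x y, a x = a y → n x = n y → x = y := by
  obtain ⟨G, hG, hGE⟩ := exists_partial_injections hE hEmeas hEcount
  have hAm : ∀ m, MeasurableSet (G m ∩ Prod.snd ⁻¹' A) :=
    fun m => (hG m).1.inter (measurable_snd hA)
  let T : ℕ → Set X := fun m => Prod.fst '' (G m ∩ Prod.snd ⁻¹' A)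
  have hT : ∀ m, MeasurableSet (T m) := fun m =>
    (hAm m).image_of_measurable_injOn measurable_fst ((hG m).2.1.mono inter_subset_left)
  have hex : ∀ x, ∃ m, x ∈ T m := by
    intro x
    obtain ⟨y, hxy, hy⟩ := hAE x
    have : (x, y) ∈ ⋃ m, G m := by rw [hGE]; exact hxy
    obtain ⟨m, hm⟩ := mem_iUnion.1 this
    exact ⟨m, (x, y), ⟨hm, hy⟩, rfl⟩
  classical
  let n : X → ℕ := fun x => Nat.find (hex x)
  have hn : Measurable n := measurable_find hex hT
  -- the graph of `a`: the pairs in `G (n x)` over `x` with second coordinate in `A`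
  let Y : Set (X × X) := ⋃ m, (G m ∩ Prod.snd ⁻¹' A) ∩ (fun p => n p.1) ⁻¹' {m}
  have hY : MeasurableSet Y := MeasurableSet.iUnion fun m =>
    (hAm m).inter (hn.comp measurable_fst (measurableSet_singleton m))
  have hYmem : ∀ p, p ∈ Y ↔ p ∈ G (n p.1) ∧ p.2 ∈ A := by
    intro p
    simp only [Y, mem_iUnion]
    constructor
    · rintro ⟨m, hm, h⟩
      have h : n p.1 = m := h
      rw [h]; exact hm
    · intro h
      exact ⟨n p.1, h, rfl⟩
  have : StandardBorelSpace Y := hY.standardBorel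
  have hf : Measurable (fun z : Y => z.1.1) := measurable_fst.comp measurable_subtype_coe
  have hbij : Function.Bijective (fun z : Y => z.1.1) := by
    constructor
    · rintro ⟨p, hp⟩ ⟨q, hq⟩ (h : p.1 = q.1)
      rw [hYmem] at hp hq
      rw [← h] at hq
      exact Subtype.ext ((hG _).2.1 hp.1 hq.1 h)
    · intro x
      obtain ⟨⟨x', y⟩, hp, rfl⟩ := Nat.find_spec (hex x)
      exact ⟨⟨(x', y), (hYmem _).2 hp⟩, rfl⟩
  obtain ⟨g, hg, -, hgr⟩ := exists_measurable_inverse hf hbij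
  have hgY : ∀ x, (x, (g x).1.2) ∈ G (n x) ∧ (g x).1.2 ∈ A := by
    intro x
    have h := (hYmem _).1 (g x).2
    have h1 : (g x).1.1 = x := hgr x
    rw [h1] at h
    refine ⟨?_, h.2⟩
    convert h.1 using 1
    exact Prod.ext h1.symm rfl
  refine ⟨fun x => (g x).1.2, n, (measurable_snd.comp measurable_subtype_coe).comp hg, hn,
    fun x => ?_, fun x => (hgY x).2, fun x y h1 h2 => ?_⟩
  · have : (x, (g x).1.2) ∈ {p : X × X | E p.1 p.2} := hGE ▸ mem_iUnion.2 ⟨_, (hgY x).1⟩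
    exact this
  · have hy := (hgY y).1
    rw [← h2] at hy
    exact congrArg Prod.fst ((hG _).2.2 (hgY x).1 hy h1)

/-- The injection is `(x, i) ↦ φ^⟨n x, i⟩ (a x)`, where `a x` is outside the range of `φ` and
`⟨n x, i⟩` is the Cantor pairing. -/
lemma exists_injection_of_compression (hE : Equivalence E)
    (hEmeas : MeasurableSet {p : X × X | E p.1 p.2})
    (hEcount : ∀ x : X, {y | E x y}.Countable) {φ : X → X} (hφ : Measurable φ)
    (hinj : Function.Injective φ) (hφE : ∀ x, E x (φ x))
    (hcompl : ∀ x, ∃ y, E x y ∧ y ∉ range φ) :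
    ∃ g : X × ℕ → X, Measurable g ∧ Function.Injective g ∧ ∀ p, E p.1 (g p) := by
  have hr : MeasurableSet (range φ)ᶜ := (hφ.measurableEmbedding hinj).measurableSet_range.compl
  obtain ⟨a, n, ha, hn, haE, haA, han⟩ :=
    exists_injection_prod_nat hE hEmeas hEcount hr hcompl
  have hit : Measurable (fun q : ℕ × X => φ^[q.1] q.2) :=
    measurable_from_prod_countable_right fun m => hφ.iterate m
  have hitE : ∀ m x, E x (φ^[m] x) := by
    intro m
    induction m with
    | zero => exact hE.refl
    | succ m ih =>
      intro x
      rw [Function.iterate_succ_apply']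
      exact hE.trans (ih x) (hφE _)
  -- the forward images of the complement of the range are pairwise disjoint
  have hdis : ∀ i j x y, x ∉ range φ → y ∉ range φ → φ^[i] x = φ^[j] y → i = j ∧ x = y := by
    intro i
    induction i with
    | zero =>
      rintro (_ | j) x y hx hy h
      · exact ⟨rfl, h⟩
      · rw [Function.iterate_succ_apply'] at h
        exact absurd ⟨_, h.symm⟩ hx
    | succ i ih =>
      rintro (_ | j) x y hx hy h
      · rw [Function.iterate_succ_apply'] at h
        exact absurd ⟨_, h⟩ hy
      · rw [Function.iterate_succ_apply', Function.iterate_succ_apply'] at h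
        obtain ⟨rfl, rfl⟩ := ih j x y hx hy (hinj h)
        exact ⟨rfl, rfl⟩
  refine ⟨fun p => φ^[Nat.pair (n p.1) p.2] (a p.1), ?_, ?_, fun p => ?_⟩
  · refine hit.comp (Measurable.prodMk ?_ (ha.comp measurable_fst))
    exact (measurable_of_countable (fun q : ℕ × ℕ => Nat.pair q.1 q.2)).comp
      ((hn.comp measurable_fst).prodMk measurable_snd)
  · rintro ⟨x, i⟩ ⟨y, j⟩ h
    obtain ⟨h1, h2⟩ := hdis _ _ _ _ (haA x) (haA y) h
    obtain ⟨h3, rfl⟩ := Nat.pair_eq_pair.1 h1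
    rw [han x y h2 h3]
  · exact hE.trans (haE p.1) (hitE _ _)

/-- Schröder–Bernstein for `g` and `x ↦ (x, 0)`. With `A` the union of the forward images of the
complement of the range of `g` under `e = g (·, 0)`, the bijection undoes `x ↦ (x, 0)` over `A` and
is `g` elsewhere. -/
lemma exists_bijection_of_injection (hE : Equivalence E) {g : X × ℕ → X} (hg : Measurable g)
    (hinj : Function.Injective g) (hgE : ∀ p, E p.1 (g p)) :
    ∃ k : X × ℕ → X, Measurable k ∧ Function.Bijective k ∧ ∀ p, E p.1 (k p) := by
  let e : X → X := fun x => g (x, 0)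
  have he : Measurable e := hg.comp measurable_prodMk_right
  have heinj : Function.Injective e := fun x y h => congrArg Prod.fst (hinj h)
  let A : Set X := ⋃ m, e^[m] '' (range g)ᶜ
  have hr : MeasurableSet (range g)ᶜ := (hg.measurableEmbedding hinj).measurableSet_range.compl
  have hA : MeasurableSet A := MeasurableSet.iUnion fun m =>
    hr.image_of_measurable_injOn (he.iterate m) (heinj.iterate m).injOn
  have hA0 : ∀ x, x ∉ A → x ∈ range g := by
    intro x hx
    by_contra h
    exact hx (mem_iUnion.2 ⟨0, x, h, rfl⟩)
  have hAe : ∀ x, x ∈ A → e x ∈ A := by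
    intro x hx
    obtain ⟨m, y, hy, rfl⟩ := mem_iUnion.1 hx
    exact mem_iUnion.2 ⟨m + 1, y, hy, Function.iterate_succ_apply' e m y⟩
  have hAr : ∀ p, g p ∈ A → p.2 = 0 ∧ p.1 ∈ A := by
    intro p hp
    obtain ⟨m, y, hy, h⟩ := mem_iUnion.1 hp
    cases m with
    | zero => exact absurd ⟨p, h.symm⟩ hy
    | succ m =>
      rw [Function.iterate_succ_apply'] at h
      obtain rfl := hinj h
      exact ⟨rfl, mem_iUnion.2 ⟨m, y, hy, rfl⟩⟩
  classical
  let S : Set (X × ℕ) := {p | p.1 ∈ A ∧ p.2 = 0}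
  have hS : MeasurableSet S :=
    (measurable_fst hA).inter (measurable_snd (measurableSet_singleton 0))
  refine ⟨S.piecewise Prod.fst g, measurable_fst.piecewise hS hg, ⟨?_, ?_⟩, ?_⟩
  · intro p q h
    by_cases hp : p ∈ S <;> by_cases hq : q ∈ S
    · simp only [piecewise_eq_of_mem _ _ _ hp, piecewise_eq_of_mem _ _ _ hq] at h
      exact Prod.ext h (hp.2.trans hq.2.symm)
    · simp only [piecewise_eq_of_mem _ _ _ hp, piecewise_eq_of_notMem _ _ _ hq] at h
      exact absurd (hAr q (h ▸ hp.1)).symm hq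
    · simp only [piecewise_eq_of_notMem _ _ _ hp, piecewise_eq_of_mem _ _ _ hq] at h
      exact absurd (hAr p (h ▸ hq.1)).symm hp
    · simp only [piecewise_eq_of_notMem _ _ _ hp, piecewise_eq_of_notMem _ _ _ hq] at h
      exact hinj h
  · intro x
    by_cases hx : x ∈ A
    · exact ⟨(x, 0), piecewise_eq_of_mem _ _ _ (show (x, 0) ∈ S from ⟨hx, rfl⟩)⟩
    · obtain ⟨⟨y, m⟩, rfl⟩ := hA0 x hx
      refine ⟨(y, m), piecewise_eq_of_notMem _ _ _ ?_⟩
      rintro ⟨hy, rfl : m = 0⟩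
      exact hx (hAe y hy)
  · intro p
    by_cases hp : p ∈ S
    · rw [piecewise_eq_of_mem _ _ _ hp]; exact hE.refl _
    · rw [piecewise_eq_of_notMem _ _ _ hp]; exact hgE p

end Compressible

/-- A countable Borel equivalence relation `E` is compressible iff it is
Borel isomorphic to `E × I_ℕ`, the relation on `X × ℕ` identifying `(x, m)` and `(y, n)`
iff `x E y`. -/
theorem stmt_13 {X : Type*} [TopologicalSpace X] [PolishSpace X]
    [MeasurableSpace X] [BorelSpace X]
    (E : X → X → Prop) (hEeq : Equivalence E)
    (hEmeas : MeasurableSet {p : X × X | E p.1 p.2})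
    (hEcount : ∀ x : X, {y | E x y}.Countable) :
    (∃ φ : X → X, Measurable φ ∧ Function.Injective φ ∧ (∀ x, E x (φ x)) ∧
        ∀ x, ∃ y, E x y ∧ y ∉ Set.range φ) ↔
    (∃ f : X → X × ℕ, Measurable f ∧ Function.Bijective f ∧
        ∀ x y, E x y ↔ E (f x).1 (f y).1) := by
  constructor
  · rintro ⟨φ, hφ, hinj, hφE, hcompl⟩
    obtain ⟨g, hg, hginj, hgE⟩ :=
      exists_injection_of_compression hEeq hEmeas hEcount hφ hinj hφE hcompl
    obtain ⟨k, hk, hkbij, hkE⟩ := exists_bijection_of_injection hEeq hg hginj hgE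
    obtain ⟨f, hf, hfk, hkf⟩ := exists_measurable_inverse hk hkbij
    have hfE : ∀ x, E (f x).1 x := fun x => by simpa [hkf] using hkE (f x)
    refine ⟨f, hf, ⟨Function.LeftInverse.injective hkf, Function.RightInverse.surjective hfk⟩,
      fun x y => ⟨fun h => ?_, fun h => ?_⟩⟩
    · exact hEeq.trans (hfE x) (hEeq.trans h (hEeq.symm (hfE y)))
    · exact hEeq.trans (hEeq.symm (hfE x)) (hEeq.trans h (hfE y))
  · rintro ⟨f, hf, hfbij, hfE⟩
    obtain ⟨k, hk, hkf, hfk⟩ := exists_measurable_inverse hf hfbij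
    have hs : Measurable (fun p : X × ℕ => (p.1, p.2 + 1)) :=
      measurable_fst.prodMk ((measurable_of_countable _).comp measurable_snd)
    refine ⟨fun x => k ((f x).1, (f x).2 + 1), hk.comp (hs.comp hf), fun x y h => ?_,
      fun x => ?_, fun x => ⟨k ((f x).1, 0), ?_, ?_⟩⟩
    · have h := Function.LeftInverse.injective hfk h
      rw [Prod.mk.injEq, Nat.add_right_cancel_iff] at h
      exact hfbij.1 (Prod.ext h.1 h.2)
    · rw [hfE, hfk]; exact hEeq.refl _
    · rw [hfE, hfk]; exact hEeq.refl _
    · rintro ⟨y, h⟩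
      have h := Function.LeftInverse.injective hfk h
      exact Nat.succ_ne_zero _ (congrArg Prod.snd h)
end

section
/- Let R ⊆ ℝ × ℝ be a meager symmetric relation. Then there is a continuous injection φ : 2^ℕ → ℝ, order-preserving from the lexicographic order on 2^ℕ to the usual order on ℝ, such that for all distinct a, b ∈ 2^ℕ, the pair (φ(a), φ(b)) is not in R. -/
/-!
The map `φ` is the limit of a binary scheme of compact intervals `[l_s, u_s]`, `s ∈ 2^n`.
Write the complement of `R` as a superset of `⋂ n, U n` with `U n` open and dense. Passing from
level `n` to level `n + 1`, each interval is cut at its midpoint, the lower half going to `s⌢0` and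
the upper half to `s⌢1`; then finitely many shrinkings make the new intervals short, disjoint for
siblings, and such that the product of any two different ones lies in one prescribed dense open set
(`shrink`, `exists_step`). This is possible because a dense open subset of the plane contains a
closed square inside any open rectangle (`exists_square`).

The lexicographic order is respected because the two children of a node are separated at the first
coordinate where two branches differ. If every `U m` is prescribed at infinitely many levels, then
for `a ≠ b` the pair `(φ a, φ b)` lies in every `U m`, hence outside `R`.
-/

open Set

theorem exists_square {U : Set (ℝ × ℝ)} (hU : IsOpen U) (hd : Dense U) {a b c d : ℝ}
    (hab : a < b) (hcd : c < d) :
    ∃ x y δ : ℝ, 0 < δ ∧ a < x - δ ∧ x + δ < b ∧ c < y - δ ∧ y + δ < d ∧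
      Icc (x - δ) (x + δ) ×ˢ Icc (y - δ) (y + δ) ⊆ U := by
  have hO : IsOpen (Ioo a b ×ˢ Ioo c d) := isOpen_Ioo.prod isOpen_Ioo
  have hne : (Ioo a b ×ˢ Ioo c d).Nonempty :=
    (nonempty_Ioo.2 hab).prod (nonempty_Ioo.2 hcd)
  obtain ⟨⟨x, y⟩, hxy, hxyU⟩ := hd.inter_open_nonempty _ hO hne
  obtain ⟨ε, hε, hball⟩ := Metric.isOpen_iff.1 (hO.inter hU) (x, y) ⟨hxy, hxyU⟩
  have hsub : Icc (x - ε / 2) (x + ε / 2) ×ˢ Icc (y - ε / 2) (y + ε / 2) ⊆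
      (Ioo a b ×ˢ Ioo c d) ∩ U := by
    rw [← Real.closedBall_eq_Icc, ← Real.closedBall_eq_Icc, closedBall_prod_same]
    exact (Metric.closedBall_subset_ball (by linarith)).trans hball
  have h1 := (hsub (show (x - ε / 2, y - ε / 2) ∈ _ by
    simp only [mem_prod, mem_Icc]; refine ⟨⟨?_, ?_⟩, ?_, ?_⟩ <;> linarith)).1
  have h2 := (hsub (show (x + ε / 2, y + ε / 2) ∈ _ by
    simp only [mem_prod, mem_Icc]; refine ⟨⟨?_, ?_⟩, ?_, ?_⟩ <;> linarith)).1
  simp only [mem_prod, mem_Ioo] at h1 h2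
  exact ⟨x, y, ε / 2, by linarith, h1.1.1, h2.1.2, h1.2.1, h2.2.2,
    fun p hp => (hsub hp).2⟩

/-- Any family of intervals can be shrunk to lengths at most `ε` so that the finitely many products prescribed by the
pairs of different indices in `T` lie in a given dense open set. -/
theorem shrink {ι : Type*} {U : Set (ℝ × ℝ)} (hU : IsOpen U) (hd : Dense U) {ε : ℝ}
    (hε : 0 < ε) (l u : ι → ℝ) (h : ∀ i, l i < u i) (T : Finset (ι × ι)) :
    ∃ l' u' : ι → ℝ, (∀ i, l i < l' i ∧ l' i < u' i ∧ u' i < u i ∧ u' i - l' i ≤ ε) ∧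
      ∀ p ∈ T, p.1 ≠ p.2 → Icc (l' p.1) (u' p.1) ×ˢ Icc (l' p.2) (u' p.2) ⊆ U := by
  classical
  induction T using Finset.induction_on with
  | empty =>
    refine ⟨fun i => l i + min (u i - l i) ε / 3, fun i => l i + 2 * min (u i - l i) ε / 3,
      fun i => ?_, by simp⟩
    have h1 := min_le_left (u i - l i) ε
    have h2 := min_le_right (u i - l i) ε
    have h3 : 0 < min (u i - l i) ε := lt_min (by linarith [h i]) hε
    refine ⟨?_, ?_, ?_, ?_⟩ <;> dsimp only <;> linarith
  | insert p T _ ih =>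
    obtain ⟨l', u', h1, h2⟩ := ih
    obtain ⟨i, j⟩ := p
    by_cases hij : i = j
    · refine ⟨l', u', h1, fun p hp hne => ?_⟩
      rcases Finset.mem_insert.1 hp with rfl | hp
      · exact absurd hij hne
      · exact h2 p hp hne
    obtain ⟨x, y, δ, hδ, hx1, hx2, hy1, hy2, hsub⟩ :=
      exists_square hU hd (h1 i).2.1 (h1 j).2.1
    let l'' : ι → ℝ := fun k => if k = i then x - δ else if k = j then y - δ else l' k
    let u'' : ι → ℝ := fun k => if k = i then x + δ else if k = j then y + δ else u' k
    have key : ∀ k, l' k ≤ l'' k ∧ l'' k < u'' k ∧ u'' k ≤ u' k := by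
      intro k
      simp only [l'', u'']
      split_ifs with hk hk'
      · subst hk; refine ⟨?_, ?_, ?_⟩ <;> linarith
      · subst hk'; refine ⟨?_, ?_, ?_⟩ <;> linarith
      · exact ⟨le_rfl, (h1 k).2.1, le_rfl⟩
    refine ⟨l'', u'', fun k => ?_, fun p hp hne => ?_⟩
    · obtain ⟨a1, a2, a3, a4⟩ := h1 k
      obtain ⟨b1, b2, b3⟩ := key k
      refine ⟨?_, ?_, ?_, ?_⟩ <;> linarith
    · rcases Finset.mem_insert.1 hp with rfl | hp
      · simpa [l'', u'', Ne.symm hij] using hsub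
      · exact (prod_mono (Icc_subset_Icc (key _).1 (key _).2.2)
          (Icc_subset_Icc (key _).1 (key _).2.2)).trans (h2 p hp hne)

/-- The `n`-th level of a binary scheme of nondegenerate intervals: the node `s` carries the
interval whose endpoints are the two components of `I s`. -/
abbrev Level (n : ℕ) := (Fin n → Bool) → {p : ℝ × ℝ // p.1 < p.2}

/-- `I'` is a good next level after `I`: intervals are nested, at most `ε` long, products of
different ones lie in `U`, and the child `s⌢0` lies strictly below its sibling `s⌢1`. -/
structure Refines {n : ℕ} (U : Set (ℝ × ℝ)) (ε : ℝ) (I : Level n) (I' : Level (n + 1)) :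
    Prop where
  lower : ∀ s, (I (Fin.init s)).1.1 ≤ (I' s).1.1
  upper : ∀ s, (I' s).1.2 ≤ (I (Fin.init s)).1.2
  short : ∀ s, (I' s).1.2 - (I' s).1.1 ≤ ε
  prod_subset : ∀ s t, s ≠ t →
    Icc (I' s).1.1 (I' s).1.2 ×ˢ Icc (I' t).1.1 (I' t).1.2 ⊆ U
  sep : ∀ s t, Fin.init s = (Fin.init t : Fin n → Bool) → s (Fin.last n) = false →
    t (Fin.last n) = true → (I' s).1.2 < (I' t).1.1

theorem exists_step {U : Set (ℝ × ℝ)} (hU : IsOpen U) (hd : Dense U) {ε : ℝ}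
    (hε : 0 < ε) {n : ℕ} (I : Level n) : ∃ I' : Level (n + 1), Refines U ε I I' := by
  let m : (Fin (n + 1) → Bool) → ℝ := fun s =>
    ((I (Fin.init s)).1.1 + (I (Fin.init s)).1.2) / 2
  let l : (Fin (n + 1) → Bool) → ℝ := fun s =>
    if s (Fin.last n) then m s else (I (Fin.init s)).1.1
  let u : (Fin (n + 1) → Bool) → ℝ := fun s =>
    if s (Fin.last n) then (I (Fin.init s)).1.2 else m s
  have hlu : ∀ s, (I (Fin.init s)).1.1 ≤ l s ∧ l s < u s ∧ u s ≤ (I (Fin.init s)).1.2 := by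
    intro s
    have := (I (Fin.init s)).2
    simp only [l, u, m]
    split_ifs <;> refine ⟨?_, ?_, ?_⟩ <;> linarith
  obtain ⟨l', u', h1, h2⟩ := shrink hU hd hε l u (fun s => (hlu s).2.1) Finset.univ
  refine ⟨fun s => ⟨(l' s, u' s), (h1 s).2.1⟩, ?_, ?_, ?_, ?_, ?_⟩
  · exact fun s => (hlu s).1.trans (h1 s).1.le
  · exact fun s => (h1 s).2.2.1.le.trans (hlu s).2.2
  · exact fun s => (h1 s).2.2.2
  · exact fun s t hst => h2 (s, t) (Finset.mem_univ _) hst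
  · intro s t hst hs ht
    have a1 := (h1 s).2.2.1
    have a2 := (h1 t).1
    simp only [u, l, m, hs, ht, hst] at a1 a2
    simp only [if_true, Bool.false_eq_true, if_false] at a1 a2
    exact a1.trans a2

/-- Mycielski's theorem along a sequence of dense open sets. -/
theorem exists_lex_embedding (U : ℕ → Set (ℝ × ℝ)) (hU : ∀ n, IsOpen (U n))
    (hd : ∀ n, Dense (U n)) :
    ∃ φ : (ℕ → Bool) → ℝ, Continuous φ ∧
      (∀ a b : ℕ → Bool,
        (∃ n : ℕ, (∀ i < n, a i = b i) ∧ a n < b n) → φ a < φ b) ∧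
      (∀ a b : ℕ → Bool, a ≠ b → ∀ m, (φ a, φ b) ∈ U m) := by
  -- `(Nat.unpair n).1` takes every value infinitely often, so each `U m` is used at
  -- arbitrarily high levels.
  have hstep : ∀ n (I : Level n), ∃ I' : Level (n + 1),
      Refines (U (Nat.unpair n).1) (1 / ((n : ℝ) + 1)) I I' := fun n I =>
    exists_step (hU _) (hd _) Nat.one_div_pos_of_nat I
  choose step hs using hstep
  let J : ∀ n, Level n := fun n => Nat.rec (fun _ => ⟨(0, 1), one_pos⟩) step n
  have hJ : ∀ n, Refines (U (Nat.unpair n).1) (1 / ((n : ℝ) + 1)) (J n) (J (n + 1)) :=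
    fun n => hs n (J n)
  let pre : ∀ n, (ℕ → Bool) → (Fin n → Bool) := fun n a i => a i
  let l : (ℕ → Bool) → ℕ → ℝ := fun a n => (J n (pre n a)).1.1
  let u : (ℕ → Bool) → ℕ → ℝ := fun a n => (J n (pre n a)).1.2
  let φ : (ℕ → Bool) → ℝ := fun a => ⨆ n, l a n
  have hmem : ∀ a n, φ a ∈ Icc (l a n) (u a n) := by
    intro a
    have hl : Monotone (l a) := monotone_nat_of_le_succ fun n => (hJ n).lower (pre (n + 1) a)
    have hu : Antitone (u a) := antitone_nat_of_succ_le fun n => (hJ n).upper (pre (n + 1) a)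
    have := hl.ciSup_mem_iInter_Icc_of_antitone hu fun n => (J n (pre n a)).2.le
    exact fun n => mem_iInter.1 this n
  refine ⟨φ, ?_, ?_, ?_⟩
  · rw [continuous_iff_continuousAt]
    intro a
    rw [ContinuousAt, Metric.tendsto_nhds]
    intro ε hε
    obtain ⟨n, hn⟩ := exists_nat_one_div_lt hε
    have hpre : Continuous (pre (n + 1)) := continuous_pi fun i => continuous_apply _
    have hopen : IsOpen (pre (n + 1) ⁻¹' {pre (n + 1) a}) :=
      (isOpen_discrete _).preimage hpre
    filter_upwards [hopen.mem_nhds rfl] with b hb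
    have hb : pre (n + 1) b = pre (n + 1) a := hb
    have h1 := hmem a (n + 1)
    have h2 := hmem b (n + 1)
    have h3 : u a (n + 1) - l a (n + 1) ≤ 1 / ((n : ℝ) + 1) := (hJ n).short (pre (n + 1) a)
    simp only [l, u, hb] at h1 h2 h3
    rw [Real.dist_eq]
    refine lt_of_le_of_lt (abs_le.2 ⟨?_, ?_⟩) hn <;> linarith [h1.1, h1.2, h2.1, h2.2]
  · rintro a b ⟨n, hab, hn⟩
    obtain ⟨ha, hb⟩ := Bool.lt_iff.1 hn
    have hinit : (Fin.init (pre (n + 1) a) : Fin n → Bool) = Fin.init (pre (n + 1) b) :=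
      funext fun i => hab i i.2
    have hsep := (hJ n).sep (pre (n + 1) a) (pre (n + 1) b) hinit ha hb
    exact ((hmem a (n + 1)).2.trans_lt hsep).trans_le (hmem b (n + 1)).1
  · intro a b hab m
    obtain ⟨k, hk⟩ := Function.ne_iff.1 hab
    have hne : pre (Nat.pair m k + 1) a ≠ pre (Nat.pair m k + 1) b := fun h =>
      hk (congrFun h ⟨k, Nat.lt_succ_of_le (Nat.right_le_pair m k)⟩)
    have hsub := (hJ (Nat.pair m k)).prod_subset _ _ hne
    rw [Nat.unpair_pair] at hsub
    exact hsub (mk_mem_prod (hmem a (Nat.pair m k + 1)) (hmem b (Nat.pair m k + 1)))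

/-- Order-preserving Mycielski theorem: for a meager symmetric relation
`R ⊆ ℝ × ℝ` there is a continuous injection of Cantor space into `ℝ`, order-preserving
from the lexicographic order, whose image is `R`-independent. -/
theorem stmt_16 (R : Set (ℝ × ℝ)) (hR : IsMeagre R)
    (hsymm : ∀ a b : ℝ, (a, b) ∈ R → (b, a) ∈ R) :
    ∃ φ : (ℕ → Bool) → ℝ, Continuous φ ∧ Function.Injective φ ∧
      (∀ a b : ℕ → Bool,
        (∃ n : ℕ, (∀ i < n, a i = b i) ∧ a n < b n) → φ a < φ b) ∧
      (∀ a b : ℕ → Bool, a ≠ b → (φ a, φ b) ∉ R) := by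
  obtain ⟨S, hSo, hSd, hSc, hS⟩ := mem_residual_iff.1 hR
  -- `univ` is added so that the countable family is nonempty and can be enumerated.
  obtain ⟨U, hU⟩ := (hSc.insert univ).exists_eq_range (insert_nonempty _ _)
  have hmem : ∀ n, U n = univ ∨ U n ∈ S := fun n => by
    have : U n ∈ insert univ S := hU ▸ mem_range_self n
    exact this
  obtain ⟨φ, hc, hlex, hφ⟩ := exists_lex_embedding U
    (fun n => (hmem n).elim (fun h => h ▸ isOpen_univ) (hSo _))
    (fun n => (hmem n).elim (fun h => h ▸ dense_univ) (hSd _))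
  refine ⟨φ, hc, fun a b hab => ?_, hlex, fun a b hab => ?_⟩
  · by_contra hne
    -- Two different branches are lexicographically comparable at their first difference.
    have hex := Function.ne_iff.1 hne
    have hmin : ∀ i < Nat.find hex, a i = b i := fun i hi => not_not.1 (Nat.find_min hex hi)
    rcases lt_or_gt_of_ne (Nat.find_spec hex) with h | h
    · exact (hlex a b ⟨_, hmin, h⟩).ne hab
    · exact (hlex b a ⟨_, fun i hi => (hmin i hi).symm, h⟩).ne hab.symm
  · refine hS (mem_sInter.2 fun t ht => ?_)
    obtain ⟨m, rfl⟩ : t ∈ range U := hU ▸ mem_insert_of_mem _ ht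
    exact hφ a b hab m
end
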